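/- arXiv:0712.2652 — 2 statements merged into one kernel-verified Lean document; each statement's English description precedes it below -/
import Mathlib

section
/- For every f in the Schwartz space on ℝ³ and every q ∈ [2,4], there is a constant C independent of f and q such that ‖f‖_{L^q_h(L²_v)} ≤ C·‖f‖_{L²}^{2/q}·‖∇_h f‖_{L²}^{1 - 2/q}, where ‖f‖_{L^q_h(L²_v)} = ‖ ‖f(x_h,·)‖_{L²(ℝ)} ‖_{L^q(ℝ²)} and ∇_h = (∂₁, ∂₂). -/
open MeasureTheory Real Set
open scoped ENNReal

noncomputable section

abbrev R3 : Type := EuclideanSpace ℝ (Fin 3)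
abbrev R2 : Type := EuclideanSpace ℝ (Fin 2)

/-- The point `(x₁, x₂, x₃) ∈ ℝ³ = ℝ²_h × ℝ_v`. -/
def pt3 (x1 x2 x3 : ℝ) : R3 := (WithLp.equiv 2 (Fin 3 → ℝ)).symm ![x1, x2, x3]

/-- The anisotropic mixed norm `‖f‖_{L^p_h(L^q_v)}`: first the `L^q` norm in the vertical
variable `x₃`, then the `L^p` norm in the horizontal variables `x_h = (x₁, x₂)`. -/
def mixedNorm {E : Type*} [NormedAddCommGroup E] (p q : ℝ≥0∞) (f : R3 → E) : ℝ≥0∞ :=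
  eLpNorm (fun xh : R2 =>
    (eLpNorm (fun x3 : ℝ => f (pt3 (xh 0) (xh 1) x3)) q volume).toReal) p volume

/-- Partial derivative in the `i`-th coordinate direction. -/
def pderiv3 {E : Type*} [NormedAddCommGroup E] [NormedSpace ℝ E] (i : Fin 3) (f : R3 → E) :
    R3 → E := fun x => fderiv ℝ f x (EuclideanSpace.single i 1)


namespace AnisoGN

open Filter Topology
lemma sch_line (f : SchwartzMap R3 ℂ) (p v : R3) (hv : v ≠ 0) (a : ℝ) :
    ‖f (p + a • v)‖ₑ ^ 2 ≤
      ∫⁻ s : ℝ, 2 * (‖f (p + s • v)‖ₑ * ‖fderiv ℝ f (p + s • v) v‖ₑ) := by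
  set I := ∫⁻ s : ℝ, 2 * (‖f (p + s • v)‖ₑ * ‖fderiv ℝ f (p + s • v) v‖ₑ) with hI
  by_cases hfin : I = ⊤
  · simp [hfin]
  have hg : ∀ s : ℝ, HasDerivAt (fun s : ℝ => f (p + s • v)) (fderiv ℝ f (p + s • v) v) s := by
    intro s
    have h1 : HasDerivAt (fun s : ℝ => p + s • v) v s := by
      simpa using ((hasDerivAt_id s).smul_const v).const_add p
    exact (f.differentiableAt.hasFDerivAt).comp_hasDerivAt s h1
  have hd : ∀ s : ℝ, HasDerivAt (fun s : ℝ => ‖f (p + s • v)‖ ^ 2)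
      (2 * inner ℝ (f (p + s • v)) (fderiv ℝ f (p + s • v) v)) s := fun s => (hg s).norm_sq
  have hcf : Continuous (fun s : ℝ => f (p + s • v)) := f.continuous.comp (by fun_prop)
  have hcd : Continuous (fun s : ℝ => fderiv ℝ f (p + s • v) v) := by
    have h0 : Continuous (fderiv ℝ f) := (f.smooth 1).continuous_fderiv (by simp)
    exact (h0.comp (by fun_prop : Continuous fun s : ℝ => p + s • v)).clm_apply continuous_const
  have hle : ∀ s : ℝ, ‖2 * inner ℝ (f (p + s • v)) (fderiv ℝ f (p + s • v) v)‖ₑ ≤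
      2 * (‖f (p + s • v)‖ₑ * ‖fderiv ℝ f (p + s • v) v‖ₑ) := by
    intro s
    rw [enorm_mul]
    gcongr
    · simp [← ofReal_norm]
    · rw [← ofReal_norm, ← ofReal_norm, ← ofReal_norm, ← ENNReal.ofReal_mul (norm_nonneg _)]
      exact ENNReal.ofReal_le_ofReal (norm_inner_le_norm _ _)
  have hint : Integrable (fun s : ℝ => 2 * inner ℝ (f (p + s • v)) (fderiv ℝ f (p + s • v) v)) := by
    refine ⟨(continuous_const.mul (hcf.inner hcd)).aestronglyMeasurable, ?_⟩
    exact lt_of_le_of_lt (lintegral_mono hle) (lt_top_iff_ne_top.2 hfin)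
  have ht : Tendsto (fun s : ℝ => ‖f (p + s • v)‖ ^ 2) atBot (𝓝 0) := by
    have h1 : Tendsto (fun s : ℝ => p + s • v) atBot (cocompact R3) := by
      have : Tendsto (fun s : ℝ => ‖s • v‖) atBot atTop := by
        simp only [norm_smul]
        simp only [Real.norm_eq_abs]
        exact tendsto_abs_atBot_atTop.atTop_mul_const (norm_pos_iff.2 hv)
      have h2 := tendsto_norm_atTop_iff_cobounded.1 this
      rw [← Metric.cobounded_eq_cocompact]
      exact (tendsto_const_add_cobounded p).comp h2
    have h3 := ((f.toZeroAtInfty.zero_at_infty').comp h1).norm.pow 2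
    simpa using h3
  have := integral_Iic_of_hasDerivAt_of_tendsto (a := a) (hd a).continuousAt.continuousWithinAt
    (fun x _ => hd x) hint.integrableOn ht
  rw [sub_zero] at this
  rw [← enorm_pow, ← ofReal_norm, norm_pow, ← this]
  calc _ ≤ ‖∫ x in Iic a, 2 * inner ℝ (f (p + x • v)) (fderiv ℝ f (p + x • v) v)‖ₑ := by
        rw [← ofReal_norm]; exact ENNReal.ofReal_le_ofReal (le_abs_self _)
    _ ≤ ∫⁻ x in Iic a, ‖2 * inner ℝ (f (p + x • v)) (fderiv ℝ f (p + x • v) v)‖ₑ :=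
        enorm_integral_le_lintegral_enorm _
    _ ≤ ∫⁻ x, ‖2 * inner ℝ (f (p + x • v)) (fderiv ℝ f (p + x • v) v)‖ₑ :=
        setLIntegral_le_lintegral _ _
    _ ≤ I := lintegral_mono hle

lemma lint_R2 (h : R2 → ℝ≥0∞) (hh : Measurable h) :
    ∫⁻ x, h x = ∫⁻ a : ℝ, ∫⁻ b : ℝ, h (!₂[a, b]) := by
  rw [← (PiLp.volume_preserving_toLp (Fin 2)).lintegral_comp hh,
    ← ((volume_preserving_finTwoArrow ℝ).symm _).lintegral_comp (by fun_prop), 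
    Measure.volume_eq_prod, lintegral_prod]
  · rfl
  · refine Measurable.aemeasurable ?_
    fun_prop

lemma lint_R3 (h : R3 → ℝ≥0∞) (hh : Measurable h) :
    ∫⁻ x, h x = ∫⁻ a : ℝ, ∫⁻ b : ℝ, ∫⁻ c : ℝ, h (pt3 a b c) := by
  rw [← (PiLp.volume_preserving_toLp (Fin 3)).lintegral_comp hh,
    ← ((volume_preserving_piFinSuccAbove (fun _ : Fin 3 => ℝ) 0).symm _).lintegral_comp (by fun_prop), 
    Measure.volume_eq_prod, lintegral_prod]
  · congr 1; ext a
    rw [← ((volume_preserving_finTwoArrow ℝ).symm _).lintegral_comp (by fun_prop),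
      Measure.volume_eq_prod, lintegral_prod]
    · congr 1; ext b; congr 1; ext c; congr 1
      ext i; fin_cases i <;> rfl
    · refine Measurable.aemeasurable ?_
      fun_prop
  · refine Measurable.aemeasurable ?_
    fun_prop

lemma pt3_measurable : Measurable (fun p : ℝ × ℝ × ℝ => pt3 p.1 p.2.1 p.2.2) := by
  have : Continuous (fun p : ℝ × ℝ × ℝ => pt3 p.1 p.2.1 p.2.2) := by
    refine (PiLp.continuous_toLp 2 _).comp (continuous_pi fun i => ?_)
    fin_cases i <;> simp <;> fun_prop
  exact this.measurable

lemma pt3_meas_comp {α : Type*} [MeasurableSpace α] {h : R3 → ℝ≥0∞} (hh : Measurable h)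
    {a b c : α → ℝ} (ha : Measurable a) (hb : Measurable b) (hc : Measurable c) :
    Measurable (fun x => h (pt3 (a x) (b x) (c x))) :=
  hh.comp (pt3_measurable.comp (ha.prodMk (hb.prodMk hc)))

/-- The abstract `L⁴` step. -/
lemma grid_step (u w1 w2 : R3 → ℝ≥0∞) (hu : Measurable u) (hw1 : Measurable w1)
    (hw2 : Measurable w2)
    (h1 : ∀ a b c, u (pt3 a b c) ≤ ∫⁻ s, w1 (pt3 s b c))
    (h2 : ∀ a b c, u (pt3 a b c) ≤ ∫⁻ s, w2 (pt3 a s c)) :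
    ∫⁻ a : ℝ, ∫⁻ b : ℝ, (∫⁻ c : ℝ, u (pt3 a b c)) ^ 2 ≤ (∫⁻ x, w1 x) * ∫⁻ x, w2 x := by
  have e1 : ∫⁻ x, w1 x = ∫⁻ b : ℝ, ∫⁻ c : ℝ, ∫⁻ a : ℝ, w1 (pt3 a b c) := by
    rw [lint_R3 _ hw1, lintegral_lintegral_swap]
    · congr 1; ext b
      rw [lintegral_lintegral_swap]
      exact (pt3_meas_comp hw1 (by fun_prop) (by fun_prop) (by fun_prop)).aemeasurable
    · refine Measurable.aemeasurable ?_
      refine Measurable.lintegral_prod_right' (f := fun p : (ℝ × ℝ) × ℝ => w1 (pt3 p.1.1 p.1.2 p.2)) ?_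
      exact pt3_meas_comp hw1 (by fun_prop) (by fun_prop) (by fun_prop)
  have e2 : ∫⁻ x, w2 x = ∫⁻ a : ℝ, ∫⁻ c : ℝ, ∫⁻ b : ℝ, w2 (pt3 a b c) := by
    rw [lint_R3 _ hw2]
    congr 1; ext b
    rw [lintegral_lintegral_swap]
    exact (pt3_meas_comp hw2 (by fun_prop) (by fun_prop) (by fun_prop)).aemeasurable
  have mA : Measurable (fun b : ℝ => ∫⁻ c : ℝ, ∫⁻ a : ℝ, w1 (pt3 a b c)) := by
    refine Measurable.lintegral_prod_right' (f := fun p : ℝ × ℝ => ∫⁻ a : ℝ, w1 (pt3 a p.1 p.2)) ?_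
    refine Measurable.lintegral_prod_right' (f := fun p : (ℝ × ℝ) × ℝ => w1 (pt3 p.2 p.1.1 p.1.2)) ?_
    exact pt3_meas_comp hw1 (by fun_prop) (by fun_prop) (by fun_prop)
  have mB : Measurable (fun a : ℝ => ∫⁻ c : ℝ, ∫⁻ b : ℝ, w2 (pt3 a b c)) := by
    refine Measurable.lintegral_prod_right' (f := fun p : ℝ × ℝ => ∫⁻ a : ℝ, w2 (pt3 p.1 a p.2)) ?_
    refine Measurable.lintegral_prod_right' (f := fun p : (ℝ × ℝ) × ℝ => w2 (pt3 p.1.1 p.2 p.1.2)) ?_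
    exact pt3_meas_comp hw2 (by fun_prop) (by fun_prop) (by fun_prop)
  calc _ ≤ ∫⁻ a : ℝ, ∫⁻ b : ℝ, (∫⁻ c : ℝ, ∫⁻ s : ℝ, w2 (pt3 a s c)) *
          (∫⁻ c : ℝ, ∫⁻ s : ℝ, w1 (pt3 s b c)) := by
        refine lintegral_mono fun a => lintegral_mono fun b => ?_
        simp only [pow_two]
        exact mul_le_mul' (lintegral_mono fun c => h2 a b c) (lintegral_mono fun c => h1 a b c)
    _ = (∫⁻ x, w1 x) * ∫⁻ x, w2 x := by
        rw [e1, e2]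
        simp_rw [lintegral_const_mul _ mA]
        rw [lintegral_mul_const _ mB, mul_comm]

lemma cs_step (u d D : R3 → ℝ≥0∞) (hu : Measurable u) (hd : Measurable d) (hdD : ∀ x, d x ≤ D x) :
    ∫⁻ x, 2 * (u x * d x) ≤ 2 * ((∫⁻ x, u x ^ (2:ℝ)) ^ (1/2 : ℝ) * (∫⁻ x, D x ^ (2:ℝ)) ^ (1/2 : ℝ)) := by
  rw [lintegral_const_mul _ (show Measurable fun x => u x * d x from hu.mul hd)]
  gcongr
  refine (ENNReal.lintegral_mul_le_Lp_mul_Lq volume Real.HolderConjugate.two_two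
    hu.aemeasurable hd.aemeasurable).trans ?_
  gcongr
  exact hdD _

lemma interp_step (G : R2 → ℝ≥0∞) (hG : Measurable G) (N D : ℝ≥0∞) (q : ℝ) (hq : q ∈ Icc (2:ℝ) 4)
    (h1 : ∫⁻ x, G x = N ^ 2) (h2 : ∫⁻ x, G x ^ 2 ≤ (2 * (N * D)) ^ 2) :
    (∫⁻ x, G x ^ (q / 2)) ^ (1 / q) ≤ 2 * N ^ (2 / q) * D ^ (1 - 2 / q) := by
  obtain ⟨hq2, hq4⟩ := hq
  have hq0 : 0 < q := by linarith
  have hA : ∫⁻ x, G x ^ (q / 2) ≤ (N ^ 2) ^ (2 - q / 2) * ((2 * (N * D)) ^ 2) ^ (q / 2 - 1) := by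
    calc _ = ∫⁻ x, G x ^ (2 - q / 2) * (G x ^ 2) ^ (q / 2 - 1) := by
          congr 1; ext x
          rw [← ENNReal.rpow_natCast, ← ENNReal.rpow_mul,
            ← ENNReal.rpow_add_of_nonneg _ _ (by linarith) (by push_cast; linarith)]
          congr 1; push_cast; ring
      _ ≤ (∫⁻ x, G x) ^ (2 - q / 2) * (∫⁻ x, G x ^ 2) ^ (q / 2 - 1) :=
          ENNReal.lintegral_mul_norm_pow_le hG.aemeasurable (hG.pow_const 2).aemeasurable
            (by linarith) (by linarith) (by ring)
      _ ≤ _ := by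
          rw [h1]
          gcongr
          linarith
  calc _ ≤ ((N ^ 2) ^ (2 - q / 2) * ((2 * (N * D)) ^ 2) ^ (q / 2 - 1)) ^ (1 / q) :=
        ENNReal.rpow_le_rpow hA (by positivity)
    _ = 2 ^ (1 - 2 / q) * N ^ (2 / q) * D ^ (1 - 2 / q) := by
        have hs : 0 ≤ 1 - 2 / q := by
          rw [sub_nonneg, div_le_one hq0]; exact hq2
        have ht : 0 ≤ (2 - q / 2) * (2 * (1 / q)) := by
          have : 0 ≤ 2 - q / 2 := by linarith
          positivity
        rw [ENNReal.mul_rpow_of_nonneg _ _ (by positivity)]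
        simp only [← ENNReal.rpow_natCast, ← ENNReal.rpow_mul]
        have e1 : ((2:ℕ):ℝ) * (q / 2 - 1) * (1 / q) = 1 - 2 / q := by
          push_cast; field_simp
        have e2 : ((2:ℕ):ℝ) * (2 - q / 2) * (1 / q) = 2 / q - (1 - 2 / q) := by
          push_cast; field_simp; ring
        have e3 : 0 ≤ 2 / q - (1 - 2 / q) := by rw [← e2]; push_cast; linarith
        have e4 : (2 / q) = (2 / q - (1 - 2 / q)) + (1 - 2 / q) := by ring
        rw [e1, e2, ENNReal.mul_rpow_of_nonneg _ _ hs, ENNReal.mul_rpow_of_nonneg _ _ hs]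
        have e5 : N ^ (2 / q) = N ^ (2 / q - (1 - 2 / q)) * N ^ (1 - 2 / q) := by
          rw [← ENNReal.rpow_add_of_nonneg _ _ e3 hs, ← e4]
        rw [e5]
        ring
    _ ≤ _ := by
        gcongr
        calc (2:ℝ≥0∞) ^ (1 - 2 / q) ≤ 2 ^ (1:ℝ) :=
              ENNReal.rpow_le_rpow_of_exponent_le (by norm_num) (by
                have : 0 ≤ 2 / q := by positivity
                linarith)
          _ = 2 := by simp

lemma pt3_line0 (a b c : ℝ) : pt3 a b c = pt3 0 b c + a • EuclideanSpace.single 0 1 := by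
  ext i; fin_cases i <;> simp [pt3]

lemma pt3_line1 (a b c : ℝ) : pt3 a b c = pt3 a 0 c + b • EuclideanSpace.single 1 1 := by
  ext i; fin_cases i <;> simp [pt3]

lemma single_ne (i : Fin 3) : (EuclideanSpace.single i 1 : R3) ≠ 0 := by
  intro h
  have := congrArg (fun v : R3 => v i) h
  simp at this

lemma line_mem (f : SchwartzMap R3 ℂ) (b c : ℝ) :
    MemLp (fun x3 : ℝ => f (pt3 b c x3)) 2 volume := by
  have hv := single_ne 2
  have e : ∀ x3, pt3 b c x3 = pt3 b c 0 + x3 • EuclideanSpace.single 2 1 := by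
    intro x3; ext i; fin_cases i <;> simp [pt3]
  have hc : Continuous (fun x3 : ℝ => f (pt3 b c x3)) := by
    refine f.continuous.comp ?_
    rw [funext e]
    fun_prop
  obtain ⟨C0, hC0⟩ := f.decay 0 0
  obtain ⟨C1, hC1⟩ := f.decay 1 0
  rw [memLp_two_iff_integrable_sq_norm hc.aestronglyMeasurable]
  have hbd : ∀ x : ℝ, ‖f (pt3 b c x)‖ ^ 2 ≤ (C0 ^ 2 + C1 ^ 2) * (1 + x ^ 2)⁻¹ := by
    intro x
    have h0 := hC0.2 (pt3 b c x)
    have h1 := hC1.2 (pt3 b c x)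
    simp only [pow_zero, one_mul, norm_iteratedFDeriv_zero, pow_one] at h0 h1
    have hx : |x| ≤ ‖pt3 b c x‖ := by
      exact PiLp.norm_apply_le (pt3 b c x) 2
    have h2 : |x| * ‖f (pt3 b c x)‖ ≤ C1 := le_trans (by gcongr) h1
    rw [← div_eq_mul_inv, le_div_iff₀ (by positivity)]
    have h3 := pow_le_pow_left₀ (by positivity) h2 2
    have h4 := pow_le_pow_left₀ (by positivity) h0 2
    rw [mul_pow, sq_abs] at h3
    nlinarith
  refine (integrable_inv_one_add_sq.const_mul (C0 ^ 2 + C1 ^ 2)).mono'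
    (hc.norm.pow 2).aestronglyMeasurable (Eventually.of_forall fun x => ?_)
  rw [Real.norm_of_nonneg (by positivity)]
  exact hbd x

lemma eLpNorm_two_eq {α E : Type*} [MeasurableSpace α] [NormedAddCommGroup E] (μ : Measure α)
    (g : α → E) : eLpNorm g 2 μ = (∫⁻ x, ‖g x‖ₑ ^ (2:ℝ) ∂μ) ^ (1 / 2 : ℝ) := by
  rw [eLpNorm_eq_lintegral_rpow_enorm_toReal (by simp) (by simp)]
  simp

theorem statement2_aux (f : SchwartzMap R3 ℂ) (q : ℝ) (hq : q ∈ Set.Icc (2:ℝ) 4) :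
      mixedNorm (ENNReal.ofReal q) 2 (⇑f) ≤
        ENNReal.ofReal 2 * eLpNorm (⇑f) 2 volume ^ (2 / q) *
          eLpNorm (fun x => (pderiv3 0 (⇑f) x, pderiv3 1 (⇑f) x)) 2 volume ^ (1 - 2 / q) := by
  have hq0 : 0 < q := by linarith [hq.1]
  have mu : Measurable (fun x => ‖f x‖ₑ) := f.continuous.enorm.measurable
  have md : ∀ i, Measurable (fun x => ‖pderiv3 i f x‖ₑ) := by
    intro i
    have h0 : Continuous (fderiv ℝ f) := (f.smooth 1).continuous_fderiv (by simp)
    exact (h0.clm_apply continuous_const).enorm.measurable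
  set G : R2 → ℝ≥0∞ := fun x => ∫⁻ c : ℝ, ‖f (pt3 (x 0) (x 1) c)‖ₑ ^ 2 with hGdef
  have mG : Measurable G := by
    refine Measurable.lintegral_prod_right'
      (f := fun p : R2 × ℝ => ‖f (pt3 (p.1 0) (p.1 1) p.2)‖ₑ ^ 2) ?_
    exact pt3_meas_comp (mu.pow_const 2) (by fun_prop) (by fun_prop) (by fun_prop)
  set N := eLpNorm (⇑f) 2 volume with hN
  set D := eLpNorm (fun x => (pderiv3 0 (⇑f) x, pderiv3 1 (⇑f) x)) 2 volume with hD
  have hN2 : ∫⁻ x, ‖f x‖ₑ ^ 2 = N ^ 2 := by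
    rw [hN, eLpNorm_two_eq, ← ENNReal.rpow_natCast, ← ENNReal.rpow_mul]
    simp
  have hmix : mixedNorm (ENNReal.ofReal q) 2 (⇑f) = (∫⁻ x, G x ^ (q / 2)) ^ (1 / q) := by
    rw [mixedNorm, eLpNorm_eq_lintegral_rpow_enorm_toReal (by simpa using hq0) (by simp),
      ENNReal.toReal_ofReal hq0.le]
    congr 2; ext x
    rw [Real.enorm_of_nonneg ENNReal.toReal_nonneg,
      ENNReal.ofReal_toReal (line_mem f _ _).eLpNorm_ne_top, eLpNorm_two_eq,
      ← ENNReal.rpow_mul]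
    simp only [hGdef, ENNReal.rpow_two]
    congr 1; ring
  have hDle : ∀ i : Fin 3, i = 0 ∨ i = 1 → 
      ∫⁻ x, 2 * (‖f x‖ₑ * ‖pderiv3 i f x‖ₑ) ≤ 2 * (N * D) := by
    intro i hi
    rw [hN, hD, eLpNorm_two_eq, eLpNorm_two_eq]
    refine cs_step _ _ _ mu (md i) fun x => ?_
    refine enorm_le_iff_norm_le.2 ?_
    rcases hi with rfl | rfl
    · exact le_max_left _ _
    · exact le_max_right _ _
  have hG1 : ∫⁻ x, G x = N ^ 2 := by
    rw [← hN2, lint_R2 _ mG, lint_R3 _ (mu.pow_const 2)]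
    simp [hGdef]
  have hG2 : ∫⁻ x, G x ^ 2 ≤ (2 * (N * D)) ^ 2 := by
    rw [lint_R2 _ (mG.pow_const 2)]
    have := grid_step (fun x => ‖f x‖ₑ ^ 2) (fun x => 2 * (‖f x‖ₑ * ‖pderiv3 0 f x‖ₑ))
      (fun x => 2 * (‖f x‖ₑ * ‖pderiv3 1 f x‖ₑ)) (mu.pow_const 2)
      ((mu.mul (md 0)).const_mul 2) ((mu.mul (md 1)).const_mul 2) 
      (fun a b c => by
        have := sch_line f (pt3 0 b c) _ (single_ne 0) a
        simpa only [pderiv3, ← pt3_line0] using this)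
      (fun a b c => by
        have := sch_line f (pt3 a 0 c) _ (single_ne 1) b
        simpa only [pderiv3, ← pt3_line1] using this)
    refine le_trans ?_ (this.trans ?_)
    · simp [hGdef]
    · rw [pow_two]
      exact mul_le_mul' (hDle 0 (Or.inl rfl)) (hDle 1 (Or.inr rfl))
  rw [hmix]
  simpa using interp_step G mG N D q hq hG1 hG2

end AnisoGN

/-- Anisotropic Gagliardo–Nirenberg inequality in mixed norms on `ℝ³`: for Schwartz `f` and
`q ∈ [2,4]`, `‖f‖_{L^q_h(L²_v)} ≤ C·‖f‖_{L²}^{2/q}·‖∇_h f‖_{L²}^{1-2/q}` with `C`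
independent of `f` and `q`. -/
theorem statement2 :
    ∃ C : ℝ, 0 < C ∧ ∀ (f : SchwartzMap R3 ℂ) (q : ℝ), q ∈ Set.Icc (2:ℝ) 4 →
      mixedNorm (ENNReal.ofReal q) 2 (⇑f) ≤
        ENNReal.ofReal C * eLpNorm (⇑f) 2 volume ^ (2 / q) *
          eLpNorm (fun x => (pderiv3 0 (⇑f) x, pderiv3 1 (⇑f) x)) 2 volume ^ (1 - 2 / q) := by
  exact ⟨2, by norm_num, fun f q hq => AnisoGN.statement2_aux f q hq⟩

end
end

section
/- For every f in the Schwartz space on ℝ² and every q ∈ [2,∞), one has ‖f‖_{L^q(ℝ²)} ≤ C·√q·‖f‖_{L²(ℝ²)}^{2/q}·‖∇f‖_{L²(ℝ²)}^{1-2/q}, with a constant C independent of q. -/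
open MeasureTheory Real Set
open scoped ENNReal

noncomputable section

lemma st_deriv_bound : ∃ L : ℝ, 0 < L ∧ (∀ x, |deriv Real.smoothTransition x| ≤ L) ∧
    (∀ x, x ≤ 0 → deriv Real.smoothTransition x = 0) ∧
    (∀ x, 1 ≤ x → deriv Real.smoothTransition x = 0) := by
  have h0 : ∀ x, x ≤ 0 → deriv Real.smoothTransition x = 0 := fun x hx => by
    apply IsLocalMin.deriv_eq_zero
    apply Filter.Eventually.of_forall
    intro y
    rw [Real.smoothTransition.zero_of_nonpos hx]
    exact Real.smoothTransition.nonneg y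
  have h1 : ∀ x, 1 ≤ x → deriv Real.smoothTransition x = 0 := fun x hx => by
    apply IsLocalMax.deriv_eq_zero
    apply Filter.Eventually.of_forall
    intro y
    rw [Real.smoothTransition.one_of_one_le hx]
    exact Real.smoothTransition.le_one y
  have hc : Continuous (deriv Real.smoothTransition) :=
    (Real.smoothTransition.contDiff (n := 1)).continuous_deriv le_rfl
  obtain ⟨L, hL⟩ := (isCompact_Icc (a := (0:ℝ)) (b := 1)).exists_bound_of_continuousOn hc.continuousOn
  refine ⟨|L| + 1, by positivity, fun x => ?_, h0, h1⟩
  by_cases hx : x ∈ Icc (0:ℝ) 1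
  · have := hL x hx
    rw [Real.norm_eq_abs] at this
    linarith [le_abs_self L]
  · rcases le_total x 0 with h | h
    · rw [h0 x h]; simp; positivity
    · rw [h1 x]
      · simp; positivity
      · by_contra h'
        exact hx ⟨h, by linarith⟩

lemma level_lemma : ∃ K : ℝ, 0 < K ∧ ∀ (f : SchwartzMap R2 ℂ) (t h : ℝ), 0 < t → 0 < h →
    ENNReal.ofReal (h ^ 2) * volume {x | t + h < ‖f x‖} ≤
      ENNReal.ofReal K * volume {x | t < ‖f x‖} *
        ∫⁻ x in {x | t < ‖f x‖ ∧ ‖f x‖ ≤ t + h}, ‖fderiv ℝ f x‖ₑ ^ (2:ℝ) := by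
  obtain ⟨L, hL, hb, hz, ho⟩ := st_deriv_bound
  set C := lintegralPowLePowLIntegralFDerivConst (volume : Measure R2) 2 with hC
  refine ⟨(C + 1) * (2 * L) ^ 2, by positivity, fun f t h ht hh => ?_⟩
  set w : ℝ := (t + h) ^ 2 - t ^ 2 with hw
  have hw0 : 0 < w := by rw [hw]; nlinarith
  set u : R2 → ℝ := fun x => Real.smoothTransition ((‖f x‖ ^ 2 - t ^ 2) / w) with hu
  have hfs : ContDiff ℝ 1 f := f.smooth 1
  have hu1 : ContDiff ℝ 1 u :=
    (Real.smoothTransition.contDiff (n := 1)).comp (((hfs.norm_sq ℝ).sub contDiff_const).div_const _)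
  have huz : ∀ x, ‖f x‖ ≤ t → u x = 0 := fun x hx => by
    apply Real.smoothTransition.zero_of_nonpos
    apply div_nonpos_of_nonpos_of_nonneg _ hw0.le
    nlinarith [norm_nonneg (f x)]
  have huc : HasCompactSupport u := by
    have h1 : Filter.Tendsto f (Filter.cocompact R2) (nhds 0) := f.toZeroAtInfty.zero_at_infty'
    have h2 := h1.norm
    rw [norm_zero] at h2
    have h3 := h2.eventually (gt_mem_nhds ht)
    rw [Filter.Eventually, Filter.mem_cocompact] at h3
    obtain ⟨S, hS, hS'⟩ := h3
    refine HasCompactSupport.intro hS fun x hx => huz x ?_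
    exact le_of_lt (hS' hx)
  have huo : ∀ x, t + h < ‖f x‖ → u x = 1 := fun x hx => by
    apply Real.smoothTransition.one_of_one_le
    rw [le_div_iff₀ hw0]
    nlinarith [norm_nonneg (f x)]
  set S : Set R2 := {x | t < ‖f x‖ ∧ ‖f x‖ ≤ t + h} with hS
  have hfc : Continuous f := f.continuous
  have hSm : MeasurableSet S :=
    (measurableSet_lt measurable_const hfc.norm.measurable).inter
      (measurableSet_le hfc.norm.measurable measurable_const)
  have hder : ∀ x, ‖fderiv ℝ u x‖ₑ ≤
      S.indicator (fun x => ENNReal.ofReal (2 * L / h) * ‖fderiv ℝ f x‖ₑ) x := by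
    intro x
    have e1 : HasFDerivAt f (fderiv ℝ f x) x := (hfs.differentiable one_ne_zero x).hasFDerivAt
    have e2 := e1.norm_sq
    have e3 : HasDerivAt Real.smoothTransition
        (deriv Real.smoothTransition ((‖f x‖ ^ 2 - t ^ 2) / w)) ((‖f x‖ ^ 2 - t ^ 2) / w) :=
      ((Real.smoothTransition.contDiff (n := 1)).differentiable one_ne_zero _).hasDerivAt
    have e4 : HasFDerivAt (fun x => (‖f x‖ ^ 2 - t ^ 2) / w)
        (w⁻¹ • (2 • (innerSL ℝ) (f x) ∘SL (fderiv ℝ f x))) x := by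
      simpa [div_eq_inv_mul] using (e2.sub_const (t ^ 2)).const_mul w⁻¹
    have e5 := e3.comp_hasFDerivAt x e4
    have e6 : fderiv ℝ u x = _ := e5.fderiv
    rw [e6]
    by_cases hx : x ∈ S
    · rw [Set.indicator_of_mem hx]
      rw [← ofReal_norm, ← ofReal_norm, ← ENNReal.ofReal_mul (by positivity)]
      apply ENNReal.ofReal_le_ofReal
      have n1 : ‖(innerSL ℝ) (f x) ∘SL (fderiv ℝ f x)‖ ≤ ‖f x‖ * ‖fderiv ℝ f x‖ := by
        refine (ContinuousLinearMap.opNorm_comp_le _ _).trans ?_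
        rw [innerSL_apply_norm]
      have n2 : ‖(2 • (innerSL ℝ) (f x) ∘SL (fderiv ℝ f x))‖ ≤ 2 * (‖f x‖ * ‖fderiv ℝ f x‖) := by
        rw [← Nat.cast_smul_eq_nsmul ℝ, norm_smul]
        simpa using n1
      rw [norm_smul, norm_smul, Real.norm_eq_abs, Real.norm_eq_abs, abs_of_pos (inv_pos.2 hw0)]
      have n3 : w⁻¹ * (2 * ‖f x‖) ≤ 2 / h := by
        rw [inv_mul_le_iff₀ hw0, mul_div_assoc', le_div_iff₀ hh]
        nlinarith [hx.2]
      calc _ ≤ L * (w⁻¹ * (2 * (‖f x‖ * ‖fderiv ℝ f x‖))) := by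
            gcongr
            exact hb _
        _ = L * (w⁻¹ * (2 * ‖f x‖)) * ‖fderiv ℝ f x‖ := by ring
        _ ≤ L * (2 / h) * ‖fderiv ℝ f x‖ := by gcongr
        _ = _ := by ring
    · rw [Set.indicator_of_notMem hx]
      have : deriv Real.smoothTransition ((‖f x‖ ^ 2 - t ^ 2) / w) = 0 := by
        rcases le_or_gt ‖f x‖ t with h1 | h1
        · apply hz
          apply div_nonpos_of_nonpos_of_nonneg _ hw0.le
          nlinarith [norm_nonneg (f x)]
        · have h2 : t + h < ‖f x‖ := by
            by_contra h2
            exact hx ⟨h1, not_lt.1 h2⟩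
          apply ho
          rw [le_div_iff₀ hw0]
          nlinarith [norm_nonneg (f x)]
      rw [this, zero_smul, ← ofReal_norm, norm_zero, ENNReal.ofReal_zero]
  have hconj : ((Module.finrank ℝ R2 : ℕ) : ℝ).HolderConjugate 2 := by
    rw [finrank_euclideanSpace, Fintype.card_fin]
    exact_mod_cast Real.HolderConjugate.two_two
  have main := lintegral_pow_le_pow_lintegral_fderiv (volume : Measure R2) hu1 huc hconj
  have hlow : volume {x | t + h < ‖f x‖} ≤ ∫⁻ x, ‖u x‖ₑ ^ (2:ℝ) := by
    rw [← lintegral_indicator_one (measurableSet_lt measurable_const hfc.norm.measurable)]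
    apply lintegral_mono
    intro x
    by_cases hx : x ∈ {x | t + h < ‖f x‖}
    · rw [Set.indicator_of_mem hx]; simp [huo x hx]
    · rw [Set.indicator_of_notMem hx]; simp
  have hfdc : Continuous (fun x => fderiv ℝ f x) := hfs.continuous_fderiv one_ne_zero
  have hup : ∫⁻ x, ‖fderiv ℝ u x‖ₑ ≤ ENNReal.ofReal (2 * L / h) *
      ((volume {x | t < ‖f x‖}) ^ (1 / 2 : ℝ) * (∫⁻ x in S, ‖fderiv ℝ f x‖ₑ ^ (2:ℝ)) ^ (1 / 2 : ℝ)) := by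
    refine (lintegral_mono hder).trans ?_
    rw [lintegral_indicator hSm, lintegral_const_mul _ hfdc.enorm.measurable]
    gcongr
    have := ENNReal.lintegral_mul_le_Lp_mul_Lq (volume.restrict S) Real.HolderConjugate.two_two
      (f := fun _ => 1) (g := fun x => ‖fderiv ℝ f x‖ₑ) aemeasurable_const hfdc.enorm.measurable.aemeasurable
    simp only [Pi.mul_apply, one_mul, ENNReal.one_rpow, lintegral_const, Measure.restrict_apply_univ] at this
    refine this.trans ?_
    gcongr
    exact fun x hx => hx.1
  have hfin := hlow.trans (main.trans (mul_le_mul_right (ENNReal.rpow_le_rpow hup zero_le_two) _))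
  rw [ENNReal.mul_rpow_of_nonneg _ _ zero_le_two, ENNReal.mul_rpow_of_nonneg _ _ zero_le_two,
    ← ENNReal.rpow_mul, ← ENNReal.rpow_mul] at hfin
  norm_num at hfin
  calc _ ≤ ENNReal.ofReal (h ^ 2) * _ := mul_le_mul_right hfin _
    _ = (C * (ENNReal.ofReal (h ^ 2) * ENNReal.ofReal (2 * L / h) ^ 2)) * volume {x | t < ‖f x‖} *
        ∫⁻ x in S, ‖fderiv ℝ f x‖ₑ ^ 2 := by ring
    _ ≤ _ := by
      norm_num
      gcongr
      rw [← ENNReal.ofReal_pow (by positivity),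
        ← ENNReal.ofReal_mul (by positivity),
        ← ENNReal.ofReal_coe_nnreal, ← ENNReal.ofReal_mul (by positivity)]
      apply ENNReal.ofReal_le_ofReal
      have : h ^ 2 * (2 * L / h) ^ 2 = (2 * L) ^ 2 := by field_simp
      rw [this]
      gcongr
      linarith

lemma amgm_prod (n : ℕ) (hn : 0 < n) (z : ℕ → ℝ) (hz : ∀ i, 0 ≤ z i) :
    ∏ i ∈ Finset.range n, z i ≤ ((∑ i ∈ Finset.range n, z i) / n) ^ n := by
  have hn' : (0:ℝ) < n := by exact_mod_cast hn
  have := Real.geom_mean_le_arith_mean (Finset.range n) (fun _ => 1) z (by simp) (by simpa using hn)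
    (fun i _ => hz i)
  simp only [Real.rpow_one, Finset.sum_const, Finset.card_range, nsmul_eq_mul, mul_one, one_mul] at this
  have hp : 0 ≤ ∏ i ∈ Finset.range n, z i := Finset.prod_nonneg fun i _ => hz i
  calc _ = ((∏ i ∈ Finset.range n, z i) ^ ((n:ℝ)⁻¹)) ^ n := by
        rw [← Real.rpow_natCast, ← Real.rpow_mul hp, inv_mul_cancel₀ hn'.ne', Real.rpow_one]
    _ ≤ _ := by gcongr

lemma lint_f_lt_top (f : SchwartzMap R2 ℂ) : ∫⁻ x, ‖f x‖ₑ ^ (2:ℝ) < ∞ := by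
  have := (f.memLp 2 volume).2
  rw [eLpNorm_eq_lintegral_rpow_enorm_toReal (by norm_num) (by norm_num)] at this
  exact (ENNReal.rpow_lt_top_iff_of_pos (by norm_num)).1 this

lemma lint_g_lt_top (f : SchwartzMap R2 ℂ) : ∫⁻ x, ‖fderiv ℝ f x‖ₑ ^ (2:ℝ) < ∞ := by
  have := ((SchwartzMap.fderivCLM ℝ R2 ℂ f).memLp 2 volume).2
  rw [eLpNorm_eq_lintegral_rpow_enorm_toReal (by norm_num) (by norm_num)] at this
  exact (ENNReal.rpow_lt_top_iff_of_pos (by norm_num)).1 this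

lemma cheb (f : SchwartzMap R2 ℂ) (t : ℝ) (ht : 0 < t) :
    ENNReal.ofReal (t ^ 2) * volume {x | t < ‖f x‖} ≤ ∫⁻ x, ‖f x‖ₑ ^ (2:ℝ) := by
  refine le_trans ?_ (mul_meas_ge_le_lintegral
    (f := fun x => ‖f x‖ₑ ^ (2:ℝ)) (f.continuous.enorm.measurable.pow_const _) (ENNReal.ofReal (t ^ 2)))
  gcongr
  intro hx
  rw [← ofReal_norm, ENNReal.ofReal_rpow_of_nonneg (norm_nonneg _) zero_le_two]
  apply ENNReal.ofReal_le_ofReal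
  rw [Real.rpow_two]
  gcongr

lemma meas_lt_top (f : SchwartzMap R2 ℂ) (t : ℝ) (ht : 0 < t) :
    volume {x | t < ‖f x‖} < ∞ := by
  have h1 := (cheb f t ht).trans_lt (lint_f_lt_top f)
  have h2 : ENNReal.ofReal (t ^ 2) ≠ 0 := by
    simp only [ne_eq, ENNReal.ofReal_eq_zero, not_le]; positivity
  exact ENNReal.lt_top_of_mul_ne_top_right h1.ne h2

lemma sum_layers (f : SchwartzMap R2 ℂ) (t h : ℝ) (hh : 0 < h) (n : ℕ) :
    ∑ k ∈ Finset.range n, ∫⁻ x in {x | t + k * h < ‖f x‖ ∧ ‖f x‖ ≤ t + k * h + h}, ‖fderiv ℝ f x‖ₑ ^ (2:ℝ)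
      ≤ ∫⁻ x in {x | ‖f x‖ ≤ t + n * h}, ‖fderiv ℝ f x‖ₑ ^ (2:ℝ) := by
  induction n with
  | zero => simp
  | succ n ih =>
    rw [Finset.sum_range_succ]
    refine (add_le_add_left ih _).trans ?_
    have hfc : Continuous f := f.continuous
    rw [← lintegral_union]
    · apply lintegral_mono_set
      rintro x (hx | hx)
      · simp only [mem_ofPred_eq] at hx ⊢
        push_cast
        nlinarith
      · simp only [mem_ofPred_eq] at hx ⊢
        push_cast
        linarith [hx.2]
    · exact (measurableSet_lt measurable_const hfc.norm.measurable).inter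
        (measurableSet_le hfc.norm.measurable measurable_const)
    · rw [Set.disjoint_left]
      intro x hx hx'
      simp only [mem_ofPred_eq] at hx hx'
      linarith [hx'.1]

lemma weak_type : ∃ K : ℝ, 1 ≤ K ∧ ∀ (f : SchwartzMap R2 ℂ) (n : ℕ) (l : ℝ), 0 < n → 0 < l →
    l ^ (2 * n + 2) * (volume {x | l < ‖f x‖}).toReal ≤
      4 ^ (n + 1) * (n * (K * (∫⁻ x, ‖fderiv ℝ f x‖ₑ ^ (2:ℝ)).toReal)) ^ n *
        (∫⁻ x, ‖f x‖ₑ ^ (2:ℝ)).toReal := by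
  obtain ⟨K, hK, hlev⟩ := level_lemma
  refine ⟨K + 1, by linarith, fun f n l hn hl => ?_⟩
  set G := (∫⁻ x, ‖fderiv ℝ f x‖ₑ ^ (2:ℝ)).toReal with hG
  set A := (∫⁻ x, ‖f x‖ₑ ^ (2:ℝ)).toReal with hA
  have hn' : (0:ℝ) < n := by exact_mod_cast hn
  set t := l / 2 with ht
  set h := l / (2 * n) with hh
  have ht0 : 0 < t := by positivity
  have hh0 : 0 < h := by positivity
  set d : ℕ → ℝ := fun k =>
    (∫⁻ x in {x | t + k * h < ‖f x‖ ∧ ‖f x‖ ≤ t + k * h + h}, ‖fderiv ℝ f x‖ₑ ^ (2:ℝ)).toReal with hd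
  have hdfin : ∀ k : ℕ, ∫⁻ x in {x | t + k * h < ‖f x‖ ∧ ‖f x‖ ≤ t + k * h + h},
      ‖fderiv ℝ f x‖ₑ ^ (2:ℝ) ≠ ∞ := fun k =>
    ((setLIntegral_le_lintegral _ _).trans_lt (lint_g_lt_top f)).ne
  have hsum : ∑ k ∈ Finset.range n, d k ≤ G := by
    rw [hd, ← ENNReal.toReal_sum (fun k _ => hdfin k)]
    exact ENNReal.toReal_mono (lint_g_lt_top f).ne
      ((sum_layers f t h hh0 n).trans (setLIntegral_le_lintegral _ _))
  have hstep : ∀ k : ℕ, h ^ 2 * (volume {x | t + (k + 1 : ℕ) * h < ‖f x‖}).toReal ≤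
      (K * d k) * (volume {x | t + k * h < ‖f x‖}).toReal := by
    intro k
    have h1 := hlev f (t + k * h) h (by positivity) hh0
    have h2 := ENNReal.toReal_mono (ENNReal.mul_ne_top (ENNReal.mul_ne_top ENNReal.ofReal_ne_top
      (meas_lt_top f (t + k * h) (by positivity)).ne) (hdfin k)) h1
    rw [ENNReal.toReal_mul, ENNReal.toReal_mul, ENNReal.toReal_mul,
      ENNReal.toReal_ofReal (by positivity), ENNReal.toReal_ofReal (by positivity)] at h2
    have e : t + (k + 1 : ℕ) * h = t + k * h + h := by push_cast; ring
    rw [e]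
    calc _ ≤ _ := h2
      _ = _ := by simp only [hd]; ring
  have hiter : ∀ j : ℕ, (h ^ 2) ^ j * (volume {x | t + j * h < ‖f x‖}).toReal ≤
      (∏ k ∈ Finset.range j, (K * d k)) * (volume {x | t < ‖f x‖}).toReal := by
    intro j
    induction j with
    | zero => simp
    | succ j ih =>
      rw [Finset.prod_range_succ, pow_succ]
      have hd0 : 0 ≤ d j := ENNReal.toReal_nonneg
      calc _ = (h ^ 2) ^ j * (h ^ 2 * (volume {x | t + (j + 1 : ℕ) * h < ‖f x‖}).toReal) := by ring
        _ ≤ (h ^ 2) ^ j * ((K * d j) * (volume {x | t + j * h < ‖f x‖}).toReal) := by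
          gcongr (h ^ 2) ^ j * ?_
          exact hstep j
        _ = (K * d j) * ((h ^ 2) ^ j * (volume {x | t + j * h < ‖f x‖}).toReal) := by ring
        _ ≤ (K * d j) * ((∏ k ∈ Finset.range j, (K * d k)) * (volume {x | t < ‖f x‖}).toReal) := by
          gcongr
        _ = _ := by ring
  have h1 := hiter n
  have e1 : t + n * h = l := by rw [ht, hh]; field_simp; norm_num
  rw [e1] at h1
  have h2 := amgm_prod n hn (fun k => K * d k) (fun k => mul_nonneg hK.le ENNReal.toReal_nonneg)
  have h3 : (∑ k ∈ Finset.range n, K * d k) / n ≤ (K + 1) * G / n := by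
    rw [← Finset.mul_sum]
    have : 0 ≤ G := ENNReal.toReal_nonneg
    gcongr
    linarith
  have h30 : 0 ≤ (∑ k ∈ Finset.range n, K * d k) / n := by
    apply div_nonneg _ hn'.le
    exact Finset.sum_nonneg fun k _ => mul_nonneg hK.le ENNReal.toReal_nonneg
  have h4 : t ^ 2 * (volume {x | t < ‖f x‖}).toReal ≤ A := by
    have := ENNReal.toReal_mono (lint_f_lt_top f).ne (cheb f t ht0)
    rwa [ENNReal.toReal_mul, ENNReal.toReal_ofReal (by positivity)] at this
  have h5 : (h ^ 2) ^ n * (volume {x | l < ‖f x‖}).toReal ≤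
      ((K + 1) * G / n) ^ n * (volume {x | t < ‖f x‖}).toReal := by
    refine h1.trans ?_
    gcongr
    exact h2.trans (by gcongr)
  have hG0 : 0 ≤ G := ENNReal.toReal_nonneg
  calc _ = (4 * n ^ 2) ^ n * l ^ 2 * ((h ^ 2) ^ n * (volume {x | l < ‖f x‖}).toReal) := by
        have : (4 * (n:ℝ) ^ 2) * h ^ 2 = l ^ 2 := by rw [hh]; field_simp; norm_num
        have e : l ^ (2 * n + 2) = (4 * (n:ℝ) ^ 2) ^ n * (h ^ 2) ^ n * l ^ 2 := by
          rw [← mul_pow, this]; ring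
        rw [e]; ring
    _ ≤ (4 * n ^ 2) ^ n * l ^ 2 * (((K + 1) * G / n) ^ n * (volume {x | t < ‖f x‖}).toReal) := by gcongr
    _ = (4 * n ^ 2 * ((K + 1) * G / n)) ^ n * 4 * (t ^ 2 * (volume {x | t < ‖f x‖}).toReal) := by
        have : l ^ 2 = 4 * t ^ 2 := by rw [ht]; ring
        rw [mul_pow (4 * (n:ℝ) ^ 2) _ n, this]; ring
    _ ≤ (4 * n ^ 2 * ((K + 1) * G / n)) ^ n * 4 * A := by gcongr
    _ = _ := by
      have : 4 * (n:ℝ) ^ 2 * ((K + 1) * G / n) = 4 * (n * ((K + 1) * G)) := by field_simp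
      rw [this, mul_pow]; ring

lemma strong_type : ∃ K : ℝ, 1 ≤ K ∧ ∀ (f : SchwartzMap R2 ℂ) (q : ℝ), 2 ≤ q →
    ∫⁻ x, ‖f x‖ₑ ^ q ≤ ENNReal.ofReal (36 ^ q *
      (√(K * q) * √((∫⁻ x, ‖fderiv ℝ f x‖ₑ ^ (2:ℝ)).toReal)) ^ (q - 2) *
        (∫⁻ x, ‖f x‖ₑ ^ (2:ℝ)).toReal) := by
  obtain ⟨K, hK, hweak⟩ := weak_type
  refine ⟨K, hK, fun f q hq => ?_⟩
  have hweakf := hweak f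
  set G := (∫⁻ x, ‖fderiv ℝ f x‖ₑ ^ (2:ℝ)).toReal with hG
  set A := (∫⁻ x, ‖f x‖ₑ ^ (2:ℝ)).toReal with hA
  have hG0 : 0 ≤ G := ENNReal.toReal_nonneg
  have hA0 : 0 ≤ A := ENNReal.toReal_nonneg
  have cake : ∀ p : ℝ, 0 < p → ∫⁻ x, ‖f x‖ₑ ^ p = ENNReal.ofReal p *
      ∫⁻ (t : ℝ) in Set.Ioi 0, volume {a | t < ‖f a‖} * ENNReal.ofReal (t ^ (p - 1)) := by
    intro p hp
    rw [← lintegral_rpow_eq_lintegral_meas_lt_mul volume (f := fun x => ‖f x‖)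
      (Filter.Eventually.of_forall fun x => norm_nonneg _) f.continuous.norm.aemeasurable hp]
    congr 1
    ext x
    rw [← ofReal_norm, ENNReal.ofReal_rpow_of_nonneg (norm_nonneg _) hp.le]
  have hq0 : 0 < q := by linarith
  rcases hG0.eq_or_lt with hG1 | hG1
  · have hz : ∀ l : ℝ, 0 < l → volume {x | l < ‖f x‖} = 0 := by
      intro l hl
      have := hweakf 1 l one_pos hl
      rw [← hG1] at this
      simp only [mul_zero, pow_one, zero_mul] at this
      have h1 : (volume {x | l < ‖f x‖}).toReal = 0 := by
        apply le_antisymm _ ENNReal.toReal_nonneg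
        exact nonpos_of_mul_nonpos_right this (by positivity)
      rcases (ENNReal.toReal_eq_zero_iff _).1 h1 with h | h
      · exact h
      · exact absurd h (meas_lt_top f l hl).ne
    rw [cake q hq0, setLIntegral_congr_fun (g := fun _ => 0) measurableSet_Ioi
      (fun t ht => by simp only [hz t ht, zero_mul])]
    simp
  have hqn : q / 2 ≤ (⌈q / 2⌉₊ : ℝ) := Nat.le_ceil _
  have hqn2 : (⌈q / 2⌉₊ : ℝ) < q / 2 + 1 := Nat.ceil_lt_add_one (by positivity)
  have hn : 0 < ⌈q / 2⌉₊ := Nat.ceil_pos.2 (by positivity)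
  set n := ⌈q / 2⌉₊
  have hn' : (0:ℝ) < n := by exact_mod_cast hn
  set r : ℝ := √(K * q) * √G with hr
  have hr0 : 0 < r := by positivity
  have hr2 : r ^ 2 = q * (K * G) := by
    rw [hr, mul_pow, Real.sq_sqrt (by positivity), Real.sq_sqrt hG0]; ring
  -- bound the weak-type constant
  have hw : ∀ l : ℝ, 0 < l → volume {x | l < ‖f x‖} ≤
      ENNReal.ofReal (4 ^ (n + 1) * r ^ (2 * n) * A * l ^ (-(2 * n + 2 : ℝ))) := by
    intro l hl
    rw [← ENNReal.ofReal_toReal (meas_lt_top f l hl).ne]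
    apply ENNReal.ofReal_le_ofReal
    have h1 := hweakf n l hn hl
    have e : l ^ (-(2 * n + 2 : ℝ)) = (l ^ (2 * n + 2))⁻¹ := by
      rw [Real.rpow_neg hl.le]
      congr 1
      exact_mod_cast Real.rpow_natCast l (2 * n + 2)
    rw [e, ← div_eq_mul_inv, le_div_iff₀ (by positivity), mul_comm]
    refine h1.trans ?_
    have : (n * (K * G)) ^ n ≤ r ^ (2 * n) := by
      rw [pow_mul, hr2]
      gcongr
      linarith
    gcongr
  have hsmall : ∫⁻ (t : ℝ) in Set.Ioc 0 r, volume {a | t < ‖f a‖} * ENNReal.ofReal (t ^ (q - 1))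
      ≤ ENNReal.ofReal (r ^ (q - 2) * A / 2) := by
    have h2 := cake 2 two_pos
    have h3 : ∫⁻ (t : ℝ) in Set.Ioi 0, volume {a | t < ‖f a‖} * ENNReal.ofReal (t ^ ((2:ℝ) - 1))
        = ENNReal.ofReal (A / 2) := by
      rw [hA, h2, ENNReal.toReal_mul, ENNReal.toReal_ofReal zero_le_two, mul_div_assoc,
        mul_div_cancel₀, ENNReal.ofReal_toReal]
      · intro h
        rw [h] at h2
        have := (lint_f_lt_top f).ne
        rw [h2] at this
        apply this
        exact ENNReal.mul_top (by simp)
      all_goals norm_num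
    calc _ ≤ ∫⁻ (t : ℝ) in Set.Ioc 0 r, ENNReal.ofReal (r ^ (q - 2)) *
          (volume {a | t < ‖f a‖} * ENNReal.ofReal (t ^ ((2:ℝ) - 1))) := by
          apply setLIntegral_mono' measurableSet_Ioc
          intro t ht
          rw [mul_left_comm, ← ENNReal.ofReal_mul (by positivity)]
          gcongr
          have : t ^ (q - 1) = t ^ (q - 2) * t ^ ((2:ℝ) - 1) := by
            rw [← Real.rpow_add ht.1]; congr 1; ring
          rw [this]
          have h1 := ht.1
          gcongr
          exact ht.2
      _ = ENNReal.ofReal (r ^ (q - 2)) * ∫⁻ (t : ℝ) in Set.Ioc 0 r,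
          (volume {a | t < ‖f a‖} * ENNReal.ofReal (t ^ ((2:ℝ) - 1))) :=
          lintegral_const_mul' _ _ ENNReal.ofReal_ne_top
      _ ≤ ENNReal.ofReal (r ^ (q - 2)) * ENNReal.ofReal (A / 2) := by
          rw [← h3]
          gcongr
          exact fun x hx => hx.1
      _ = _ := by rw [← ENNReal.ofReal_mul (by positivity)]; congr 1; ring
  have hbig : ∫⁻ (t : ℝ) in Set.Ioi r, volume {a | t < ‖f a‖} * ENNReal.ofReal (t ^ (q - 1))
      ≤ ENNReal.ofReal (4 ^ (n + 1) * r ^ (q - 2) * A / 2) := by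
    have hexp : q - 3 - 2 * n < -1 := by linarith
    calc _ ≤ ∫⁻ (t : ℝ) in Set.Ioi r, ENNReal.ofReal
          (4 ^ (n + 1) * r ^ (2 * n) * A * t ^ (q - 3 - 2 * n)) := by
          apply setLIntegral_mono' measurableSet_Ioi
          intro t ht
          have ht0 : 0 < t := hr0.trans ht
          refine (mul_le_mul_left (hw t ht0) _).trans ?_
          rw [← ENNReal.ofReal_mul (by positivity)]
          apply le_of_eq
          congr 1
          rw [mul_assoc, ← Real.rpow_add ht0]
          congr 2
          ring
      _ = ENNReal.ofReal (∫ t in Set.Ioi r, 4 ^ (n + 1) * r ^ (2 * n) * A * t ^ (q - 3 - 2 * n)) := by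
          rw [ofReal_integral_eq_lintegral_ofReal]
          · exact (integrableOn_Ioi_rpow_of_lt hexp hr0).const_mul _
          · refine (ae_restrict_iff' measurableSet_Ioi).2 (Filter.Eventually.of_forall fun t ht => ?_)
            have ht0 : 0 < t := hr0.trans ht
            simp only [Pi.zero_apply]
            positivity
      _ ≤ _ := by
          apply ENNReal.ofReal_le_ofReal
          rw [integral_const_mul, integral_Ioi_rpow_of_lt hexp hr0]
          have e : r ^ (q - 2) = r ^ (2 * n) * r ^ (q - 3 - 2 * n + 1) := by
            rw [← Real.rpow_natCast r (2 * n), ← Real.rpow_add hr0]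
            congr 1
            push_cast
            ring
          rw [e, neg_div, ← div_neg]
          have h2 : r ^ (q - 3 - 2 * n + 1) / (-(q - 3 - 2 * n + 1)) ≤ r ^ (q - 3 - 2 * n + 1) / 2 := by
            gcongr
            linarith
          calc _ ≤ 4 ^ (n + 1) * r ^ (2 * n) * A * (r ^ (q - 3 - 2 * n + 1) / 2) := by gcongr
            _ = _ := by ring
  rw [cake q hq0, ← Set.Ioc_union_Ioi_eq_Ioi hr0.le, lintegral_union measurableSet_Ioi
    Set.Ioc_disjoint_Ioi_same]
  refine (mul_le_mul_right (add_le_add hsmall hbig) _).trans ?_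
  rw [← ENNReal.ofReal_add (by positivity) (by positivity), ← ENNReal.ofReal_mul hq0.le]
  apply ENNReal.ofReal_le_ofReal
  have c1 : (4:ℝ) ^ (n + 1) ≤ 16 * 2 ^ q := by
    have : (2:ℝ) ^ q = 4 ^ (q / 2) := by
      rw [show (4:ℝ) = 2 ^ (2:ℝ) by norm_num, ← Real.rpow_mul zero_le_two]
      congr 1; ring
    rw [this, show (16:ℝ) = 4 ^ (2:ℝ) by norm_num, ← Real.rpow_add (by norm_num),
      ← Real.rpow_natCast]
    apply Real.rpow_le_rpow_of_exponent_le (by norm_num)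
    push_cast
    linarith
  have c2 : q ≤ 2 ^ q := by
    have h1 := one_add_mul_self_le_rpow_one_add (s := 1) (by norm_num) (p := q) (by linarith)
    norm_num at h1
    linarith
  have c3 : (9:ℝ) ≤ 9 ^ q := by
    conv_lhs => rw [← Real.rpow_one 9]
    exact Real.rpow_le_rpow_of_exponent_le (by norm_num) (by linarith)
  have c4 : (1:ℝ) ≤ 2 ^ q := by linarith
  have c5 : (36:ℝ) ^ q = 9 ^ q * 2 ^ q * 2 ^ q := by
    rw [← Real.mul_rpow (by norm_num) (by norm_num), ← Real.mul_rpow (by norm_num) (by norm_num)]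
    norm_num
  have hX : 0 ≤ r ^ (q - 2) * A := by positivity
  calc _ = (q * (1 + 4 ^ (n + 1)) / 2) * (r ^ (q - 2) * A) := by ring
    _ ≤ 36 ^ q * (r ^ (q - 2) * A) := by
      gcongr
      rw [c5]
      calc q * (1 + 4 ^ (n + 1)) / 2 ≤ 2 ^ q * (2 * 2 ^ q + 16 * 2 ^ q) / 2 := by
            gcongr
            linarith
        _ = 9 * 2 ^ q * 2 ^ q := by ring
        _ ≤ _ := by gcongr
    _ = _ := by ring

/-- Two-dimensional Gagliardo–Nirenberg inequality with explicit growth `√q` of the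
constant: for Schwartz `f` on `ℝ²` and `q ∈ [2,∞)`,
`‖f‖_{L^q} ≤ C·√q·‖f‖_{L²}^{2/q}·‖∇f‖_{L²}^{1-2/q}` with `C` independent of `q`. -/
theorem statement3 :
    ∃ C : ℝ, 0 < C ∧ ∀ (f : SchwartzMap R2 ℂ) (q : ℝ), 2 ≤ q →
      eLpNorm (⇑f) (ENNReal.ofReal q) volume ≤
        ENNReal.ofReal (C * Real.sqrt q) * eLpNorm (⇑f) 2 volume ^ (2 / q) *
          eLpNorm (fun x => ‖fderiv ℝ (⇑f) x‖) 2 volume ^ (1 - 2 / q) := by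
  obtain ⟨K, hK, hs⟩ := strong_type
  refine ⟨36 * √K, by positivity, fun f q hq => ?_⟩
  have hq0 : 0 < q := by linarith
  have hmain := hs f q hq
  have hAe := ENNReal.ofReal_toReal (lint_f_lt_top f).ne
  have hGe := ENNReal.ofReal_toReal (lint_g_lt_top f).ne
  rw [eLpNorm_norm]
  rw [eLpNorm_eq_lintegral_rpow_enorm_toReal (by simpa using hq0) ENNReal.ofReal_ne_top,
    eLpNorm_eq_lintegral_rpow_enorm_toReal (by norm_num) (by norm_num),
    eLpNorm_eq_lintegral_rpow_enorm_toReal (by norm_num) (by norm_num),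
    ENNReal.toReal_ofReal hq0.le]
  simp only [ENNReal.toReal_ofNat]
  rw [← hAe, ← hGe]
  set G := (∫⁻ x, ‖fderiv ℝ f x‖ₑ ^ (2:ℝ)).toReal with hG
  set A := (∫⁻ x, ‖f x‖ₑ ^ (2:ℝ)).toReal with hA
  have hG0 : 0 ≤ G := ENNReal.toReal_nonneg
  have hA0 : 0 ≤ A := ENNReal.toReal_nonneg
  have hexp : 0 ≤ 1 - 2 / q := by
    rw [sub_nonneg, div_le_one hq0]; exact hq
  refine (ENNReal.rpow_le_rpow hmain (by positivity)).trans ?_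
  rw [← ENNReal.rpow_mul, ENNReal.ofReal_rpow_of_nonneg (by positivity) (by positivity),
    ENNReal.ofReal_rpow_of_nonneg hA0 (by positivity),
    ENNReal.ofReal_rpow_of_nonneg hG0 (by positivity),
    ENNReal.ofReal_rpow_of_nonneg (by positivity) hexp,
    ← ENNReal.ofReal_mul (by positivity), ← ENNReal.ofReal_mul (by positivity)]
  apply ENNReal.ofReal_le_ofReal
  rw [Real.mul_rpow (by positivity) hA0, Real.mul_rpow (by positivity) (by positivity),
    ← Real.rpow_mul (by norm_num), ← Real.rpow_mul (by positivity), ← Real.sqrt_eq_rpow]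
  have e1 : q * (1 / q) = 1 := by field_simp
  have e2 : (q - 2) * (1 / q) = 1 - 2 / q := by field_simp
  have e3 : 1 / 2 * (2 / q) = 1 / q := by field_simp
  rw [e1, e2, e3, Real.rpow_one, Real.mul_rpow (by positivity) (by positivity)]
  have h1 : (1:ℝ) ≤ √(K * q) := by
    rw [Real.one_le_sqrt]; nlinarith
  have h2 : √(K * q) ^ (1 - 2 / q) ≤ √(K * q) := by
    conv_rhs => rw [← Real.rpow_one √(K * q)]
    apply Real.rpow_le_rpow_of_exponent_le h1
    have : 0 ≤ 2 / q := by positivity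
    linarith
  have h3 : √(K * q) = √K * √q := Real.sqrt_mul (by linarith) q
  calc _ ≤ 36 * (√(K * q) * √G ^ (1 - 2 / q)) * A ^ (1 / q) := by gcongr
    _ = _ := by rw [h3]; ring

end
end
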